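/- For every τ ∈ ℍ and every z in a sufficiently small neighborhood of 0 one has ∑_{n≥0} (−1)^n U_{2n}(q) (πz)^{2n+1}/(2n+1)! = πz · exp(∑_{n≥1} B_{2n} E_{2n}(τ) (2πiz)^{2n} / (2n·(2n)!)). -/

import Mathlib

/-!
With `q = e^{2πiτ}` and `x = πz`, expanding the sines shows that the left-hand side is
`∑_j (-1)^j q^{j(j+1)/2} sin((2j+1)x)` divided by `∑_j (-1)^j (2j+1) q^{j(j+1)/2}`
(`hasSum_theta_sin`). By the Jacobi triple product the numerator is
`(∏ (1 - qᵏ)) · sin x · ∏ (1 - 2cos(2x) qᵏ + q²ᵏ)` and the denominator is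
`(∏ (1 - qᵏ)) · ∏ (1 - 2qᵏ + q²ᵏ)`. Both are instances of `jacobi_triple`, stated for an arbitrary
sequence `S` with `S₁ = (t+1) S₀` and `S_{j+2} + S_j = t S_{j+1}`. It follows from a
finite identity whose coefficients are the Gaussian binomials `[2n+1, n-j]_q` (`finite_triple`) by
dominated convergence.

It remains to take logarithms. Euler's product and the values `ζ(2k)` give
`sin(πz) = πz · exp(∑ B_{2k} (2πiz)^{2k} / (2k (2k)!))` (`sin_eq_exp`). Expanding the logarithms of
the factors `1 - qⁿe^{±X}`, `X = 2πiz`, and summing first over the exponents of `q` gives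
`∏ (1 - 2cosh(X) qᵏ + q²ᵏ) / ∏ (1 - 2qᵏ + q²ᵏ) = exp(-∑_k 2 X^{2k}/(2k)! · ∑_n σ_{2k-1}(n) qⁿ)`
(`quad_ratio`). The two exponents add up to the Eisenstein series.
-/

open Complex Filter
open scoped Real

noncomputable section

/-- `q = e^{2πiτ}`. -/
def qq (τ : ℂ) : ℂ := Complex.exp (2 * (π : ℂ) * Complex.I * τ)

/-- The normalized Eisenstein series `E_{2k}(τ) = 1 − (4k/B_{2k}) ∑_{n≥1} σ_{2k−1}(n) qⁿ`. -/
def Eser (k : ℕ) (τ : ℂ) : ℂ :=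
  1 - (4 * k / ((bernoulli (2 * k) : ℚ) : ℂ)) *
    ∑' n : ℕ, ((ArithmeticFunction.sigma (2 * k - 1)) (n + 1) : ℂ) * qq τ ^ (n + 1)

/-- Ramanujan's series `U_{2n}(q)`:
numerator `∑_{j≥0} (−1)^j (2j+1)^{2n+1} q^{j(j+1)/2}` divided by
denominator `∑_{j≥0} (−1)^j (2j+1) q^{j(j+1)/2}`. -/
def Uram (n : ℕ) (q : ℂ) : ℂ :=
  (∑' j : ℕ, (-1 : ℂ) ^ j * ((2 * j + 1 : ℕ) : ℂ) ^ (2 * n + 1) * q ^ (j * (j + 1) / 2)) /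
    (∑' j : ℕ, (-1 : ℂ) ^ j * ((2 * j + 1 : ℕ) : ℂ) * q ^ (j * (j + 1) / 2))

/-! ### The finite triple product -/

/-- The finite `q`-Pochhammer symbol `(q;q)_n = ∏_{k=1}^n (1 - q^k)`. -/
def poch (q : ℂ) (n : ℕ) : ℂ := ∏ k ∈ Finset.range n, (1 - q ^ (k + 1))

/-- `1/(q;q)_m` for an integer index, with the convention that it vanishes for `m < 0`. -/
def rpoch (q : ℂ) (m : ℤ) : ℂ := if 0 ≤ m then (poch q m.toNat)⁻¹ else 0

/-- The Gaussian binomial coefficient `[2n+1, n-j]_q`, which is `0` for `j > n`. -/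
def gaussC (q : ℂ) (n : ℕ) (j : ℤ) : ℂ :=
  poch q (2 * n + 1) * rpoch q (n - j) * rpoch q (n + 1 + j)

lemma one_sub_pow_ne_zero {q : ℂ} (hq : ‖q‖ < 1) (k : ℕ) : 1 - q ^ (k + 1) ≠ 0 := by
  intro h
  have h1 : q ^ (k + 1) = 1 := (sub_eq_zero.mp h).symm
  have h2 : ‖q‖ ^ (k + 1) = 1 := by rw [← norm_pow, h1, norm_one]
  exact absurd h2 (pow_lt_one₀ (norm_nonneg _) hq (by omega)).ne

lemma poch_ne_zero {q : ℂ} (hq : ‖q‖ < 1) (n : ℕ) : poch q n ≠ 0 :=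
  Finset.prod_ne_zero_iff.mpr fun k _ => one_sub_pow_ne_zero hq k

lemma poch_succ (q : ℂ) (n : ℕ) : poch q (n + 1) = poch q n * (1 - q ^ (n + 1)) :=
  Finset.prod_range_succ _ _

/-- With the convention at negative indices, the recursion holds at every integer. -/
lemma rpoch_sub_one {q : ℂ} (hq : ‖q‖ < 1) (m : ℤ) :
    rpoch q (m - 1) = (1 - q ^ m) * rpoch q m := by
  rcases lt_trichotomy m 0 with h | h | h
  · simp [rpoch, not_le.mpr h, show ¬ (1 ≤ m) by omega]
  · subst h; simp [rpoch]
  · obtain ⟨k, rfl⟩ : ∃ k : ℕ, m = k + 1 := ⟨(m - 1).toNat, by omega⟩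
    have h1 : ((k : ℤ) + 1).toNat = k + 1 := by omega
    have h2 := one_sub_pow_ne_zero hq k
    have h3 := poch_ne_zero hq k
    have h4 : q ^ ((k : ℤ) + 1) = q ^ (k + 1) := by exact_mod_cast zpow_natCast q (k + 1)
    rw [rpoch, rpoch, if_pos (by omega), if_pos (by omega), h1, poch_succ, h4]
    simp only [add_sub_cancel_right, Int.toNat_natCast]
    field_simp

lemma gaussC_rec {q : ℂ} (hq0 : q ≠ 0) (hq : ‖q‖ < 1) (n : ℕ) (j : ℤ) :
    gaussC q (n + 1) j = (1 + q ^ (2 * (n + 1))) * gaussC q n j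
      + q ^ (n + 1) * ((q ^ j)⁻¹ * gaussC q n (j - 1) + q ^ j * q * gaussC q n (j + 1)) := by
  have hy : q ^ j ≠ 0 := zpow_ne_zero _ hq0
  have a1 := rpoch_sub_one hq ((n : ℤ) + 1 - j)
  have a2 := rpoch_sub_one hq ((n : ℤ) - j)
  have b1 := rpoch_sub_one hq ((n : ℤ) + 2 + j)
  have b2 := rpoch_sub_one hq ((n : ℤ) + 1 + j)
  have e1 : q ^ ((n : ℤ) + 1 - j) = q ^ n * q / q ^ j := by
    rw [zpow_sub₀ hq0, zpow_add₀ hq0]; simp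
  have e2 : q ^ ((n : ℤ) - j) = q ^ n / q ^ j := by rw [zpow_sub₀ hq0]; simp
  have e3 : q ^ ((n : ℤ) + 2 + j) = q ^ n * q ^ 2 * q ^ j := by
    rw [zpow_add₀ hq0, zpow_add₀ hq0]; norm_cast
  have e4 : q ^ ((n : ℤ) + 1 + j) = q ^ n * q * q ^ j := by
    rw [zpow_add₀ hq0, zpow_add₀ hq0]; simp
  rw [e1] at a1; rw [e2] at a2; rw [e3] at b1; rw [e4] at b2
  have p : poch q (2 * (n + 1) + 1)
      = poch q (2 * n + 1) * (1 - q ^ (2 * n + 2)) * (1 - q ^ (2 * n + 3)) := by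
    rw [show 2 * (n + 1) + 1 = 2 * n + 1 + 1 + 1 by ring, poch_succ, poch_succ]
  unfold gaussC
  rw [p]
  push_cast
  rw [show (n : ℤ) + 1 + 1 + j = n + 2 + j by ring, show (n : ℤ) - (j - 1) = n + 1 - j by ring,
    show (n : ℤ) + 1 + (j - 1) = n + 1 + j - 1 by ring,
    show (n : ℤ) - (j + 1) = n - j - 1 by ring, show (n : ℤ) + 1 + (j + 1) = n + 2 + j by ring,
    a2, b2, show (n : ℤ) - j = n + 1 - j - 1 by ring, a1,
    show (n : ℤ) + 1 + j = n + 2 + j - 1 by ring, b1]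
  generalize rpoch q ((n : ℤ) + 1 - j) = A
  generalize rpoch q ((n : ℤ) + 2 + j) = B
  generalize poch q (2 * n + 1) = C
  generalize q ^ j = y at *
  field_simp
  ring

/-- The weight `(-1)^j q^{j(j+1)/2}` of the `j`-th term of the theta series. -/
def thetaW (q : ℂ) (j : ℕ) : ℂ := (-1 : ℂ) ^ j * q ^ (j * (j + 1) / 2)

lemma thetaW_succ (q : ℂ) (j : ℕ) : thetaW q (j + 1) = -(q ^ (j + 1)) * thetaW q j := by
  have h : (j + 1) * (j + 1 + 1) / 2 = j * (j + 1) / 2 + (j + 1) := by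
    rw [show (j + 1) * (j + 1 + 1) = j * (j + 1) + (j + 1) * 2 by ring,
      Nat.add_mul_div_right _ _ (by norm_num)]
  rw [thetaW, thetaW, h, pow_succ, pow_add]
  ring

/-- Summation by parts for a sequence satisfying `S₁ = (t+1) S₀` and `S_{j+2} + S_j = t S_{j+1}`. -/
lemma mul_sum_rec {S : ℕ → ℂ} {t : ℂ} (h1 : S 1 = (t + 1) * S 0)
    (h2 : ∀ j, S (j + 2) + S j = t * S (j + 1)) (a : ℕ → ℂ) (N : ℕ) :
    t * ∑ j ∈ Finset.range (N + 1), a j * S j =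
      (a 1 - a 0) * S 0 + ∑ j ∈ Finset.range N, (a j + a (j + 2)) * S (j + 1)
        + a N * S (N + 1) - a (N + 1) * S N := by
  induction N with
  | zero => simp [h1]; ring
  | succ N ih =>
    rw [Finset.sum_range_succ, mul_add, ih, Finset.sum_range_succ]
    linear_combination (-a (N + 1)) * h2 N

lemma gaussC_eq_zero (q : ℂ) {n : ℕ} {j : ℤ} (h : (n : ℤ) < j) : gaussC q n j = 0 := by
  simp [gaussC, rpoch, show ¬ (j ≤ n) by omega]

/-- The finite form of the Jacobi triple product. -/
lemma finite_triple {q : ℂ} (hq0 : q ≠ 0) (hq : ‖q‖ < 1) {S : ℕ → ℂ} {t : ℂ}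
    (h1 : S 1 = (t + 1) * S 0) (h2 : ∀ j, S (j + 2) + S j = t * S (j + 1)) (n : ℕ) :
    S 0 * ∏ k ∈ Finset.range n, (1 - t * q ^ (k + 1) + q ^ (2 * (k + 1))) =
      ∑ j ∈ Finset.range (n + 1), thetaW q j * gaussC q n j * S j := by
  induction n with
  | zero =>
    have := one_sub_pow_ne_zero hq 0
    simp [thetaW, gaussC, rpoch, poch] at this ⊢
    field_simp
  | succ n ih =>
    have hz : gaussC q n ((n + 1 : ℕ) : ℤ) = 0 := gaussC_eq_zero q (by push_cast; omega)
    have hz2 : gaussC q n ((n + 2 : ℕ) : ℤ) = 0 := gaussC_eq_zero q (by push_cast; omega)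
    -- extending the range by one vanishing term makes both boundary terms disappear
    have ih' : S 0 * ∏ k ∈ Finset.range n, (1 - t * q ^ (k + 1) + q ^ (2 * (k + 1))) =
        ∑ j ∈ Finset.range (n + 1 + 1), thetaW q j * gaussC q n j * S j := by
      rw [Finset.sum_range_succ, hz, ih]; ring
    have key := mul_sum_rec h1 h2 (fun j => thetaW q j * gaussC q n j) (n + 1)
    simp only [hz, hz2] at key
    rw [← ih'] at key
    have r0 := gaussC_rec hq0 hq n 0
    have sym : gaussC q n (0 - 1) = gaussC q n 0 := by
      unfold gaussC
      rw [show (n : ℤ) - (0 - 1) = n + 1 + 0 by ring, show (n : ℤ) + 1 + (0 - 1) = n - 0 by ring]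
      ring
    rw [sym] at r0
    rw [Finset.prod_range_succ, ← mul_assoc, mul_add, mul_sub, ← mul_assoc, mul_comm _ t, key]
    rw [ih', Finset.sum_range_succ' _ (n + 1), Finset.sum_range_succ' _ (n + 1)]
    have hs : ∑ j ∈ Finset.range (n + 1),
        thetaW q (j + 1) * gaussC q (n + 1) ((j + 1 : ℕ) : ℤ) * S (j + 1) =
      ∑ j ∈ Finset.range (n + 1), ((1 + q ^ (2 * (n + 1))) *
        (thetaW q (j + 1) * gaussC q n ((j + 1 : ℕ) : ℤ) * S (j + 1)) -
        q ^ (n + 1) * ((thetaW q j * gaussC q n j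
          + thetaW q (j + 2) * gaussC q n ((j + 2 : ℕ) : ℤ)) * S (j + 1))) := by
      refine Finset.sum_congr rfl fun j _ => ?_
      rw [gaussC_rec hq0 hq n, zpow_natCast, thetaW_succ q (j + 1), thetaW_succ q j,
        show ((j + 1 : ℕ) : ℤ) - 1 = j by push_cast; ring,
        show ((j + 1 : ℕ) : ℤ) + 1 = ((j + 2 : ℕ) : ℤ) by push_cast; ring]
      field_simp
      ring
    rw [hs, Finset.sum_sub_distrib, ← Finset.mul_sum, ← Finset.mul_sum]
    have w1 := thetaW_succ q 0
    simp only [Nat.cast_zero, r0, zero_add, w1, Nat.cast_one, zpow_zero]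
    ring

/-! ### The Jacobi triple product -/

lemma multipliable_quad {q : ℂ} (hq : ‖q‖ < 1) (t : ℂ) :
    Multipliable fun k : ℕ => 1 - t * q ^ (k + 1) + q ^ (2 * (k + 1)) := by
  have hs : Summable fun k : ℕ => ‖q‖ ^ (k + 1) :=
    (summable_nat_add_iff 1).mpr (summable_geometric_of_lt_one (norm_nonneg _) hq)
  have := multipliable_one_add_of_summable (R := ℂ)
    (f := fun k : ℕ => -(t * q ^ (k + 1)) + q ^ (2 * (k + 1))) (by
      refine Summable.of_nonneg_of_le (fun _ => norm_nonneg _) (fun k => ?_)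
        (hs.mul_left (‖t‖ + 1))
      refine (norm_add_le _ _).trans ?_
      rw [norm_neg, norm_mul, norm_pow, norm_pow, add_mul, one_mul]
      have := pow_le_pow_of_le_one (norm_nonneg q) hq.le (show k + 1 ≤ 2 * (k + 1) by omega)
      linarith)
  refine this.congr fun k => ?_
  ring

lemma tendsto_poch {q : ℂ} (hq : ‖q‖ < 1) :
    Tendsto (poch q) atTop (nhds (∏' k : ℕ, (1 - q ^ (k + 1)))) :=
  (ModularForm.multipliable_one_sub_pow hq).hasProd.tendsto_prod_nat

lemma tprod_one_sub_pow_ne_zero {q : ℂ} (hq : ‖q‖ < 1) :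
    ∏' k : ℕ, (1 - q ^ (k + 1)) ≠ 0 := by
  have hs : Summable fun k : ℕ => ‖q‖ ^ (k + 1) :=
    (summable_nat_add_iff 1).mpr (summable_geometric_of_lt_one (norm_nonneg _) hq)
  have := tprod_one_add_ne_zero_of_summable (R := ℂ) (f := fun k : ℕ => -q ^ (k + 1))
    (fun k => by simpa [sub_eq_add_neg] using one_sub_pow_ne_zero hq k)
    (by simpa using hs)
  simpa [sub_eq_add_neg] using this

lemma gaussC_bounded {q : ℂ} (hq : ‖q‖ < 1) : ∃ M : ℝ, ∀ n j, ‖gaussC q n j‖ ≤ M := by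
  obtain ⟨M, hM⟩ := (Metric.isBounded_range_of_tendsto _ (tendsto_poch hq)).exists_norm_le
  obtain ⟨K, hK⟩ := (Metric.isBounded_range_of_tendsto _
    ((tendsto_poch hq).inv₀ (tprod_one_sub_pow_ne_zero hq))).exists_norm_le
  have hM' : ∀ n, ‖poch q n‖ ≤ M := fun n => hM _ ⟨n, rfl⟩
  have hK' : ∀ n, ‖(poch q n)⁻¹‖ ≤ K := fun n => hK _ ⟨n, rfl⟩
  have hK0 : 0 ≤ K := (norm_nonneg _).trans (hK' 0)
  have hM0 : 0 ≤ M := (norm_nonneg _).trans (hM' 0)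
  have hr : ∀ m, ‖rpoch q m‖ ≤ K := fun m => by
    unfold rpoch
    split_ifs
    · exact hK' _
    · simpa using hK0
  refine ⟨M * K * K, fun n j => ?_⟩
  rw [gaussC, norm_mul, norm_mul]
  gcongr
  exacts [hM' _, hr _, hr _]

lemma tendsto_gaussC {q : ℂ} (hq : ‖q‖ < 1) (j : ℕ) :
    Tendsto (fun n => gaussC q n j) atTop (nhds (∏' k : ℕ, (1 - q ^ (k + 1)))⁻¹) := by
  have hp := tendsto_poch hq
  have h0 := tprod_one_sub_pow_ne_zero hq
  have hi := hp.inv₀ h0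
  have l1 : Tendsto (fun n : ℕ => poch q (2 * n + 1)) atTop
      (nhds (∏' k : ℕ, (1 - q ^ (k + 1)))) :=
    hp.comp (tendsto_atTop_mono (f := id) (g := fun n => 2 * n + 1)
      (fun n => by simp only [id]; omega) tendsto_id)
  have l2 : Tendsto (fun n : ℕ => rpoch q ((n : ℤ) - j)) atTop
      (nhds (∏' k : ℕ, (1 - q ^ (k + 1)))⁻¹) := by
    refine (hi.comp (tendsto_sub_atTop_nat j)).congr' ?_
    filter_upwards [eventually_ge_atTop j] with n hn
    rw [rpoch, if_pos (by omega), show ((n : ℤ) - j).toNat = n - j by omega]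
    rfl
  have l3 : Tendsto (fun n : ℕ => rpoch q ((n : ℤ) + 1 + j)) atTop
      (nhds (∏' k : ℕ, (1 - q ^ (k + 1)))⁻¹) := by
    refine (hi.comp (tendsto_atTop_mono (f := id) (g := fun n => n + 1 + j)
      (fun n => by simp only [id]; omega) tendsto_id)).congr fun n => ?_
    rw [rpoch, if_pos (by omega), show ((n : ℤ) + 1 + j).toNat = n + 1 + j by omega]
    rfl
  have := (l1.mul l2).mul l3
  rwa [mul_inv_cancel₀ h0, one_mul] at this

/-- The Jacobi triple product, for any sequence obeying the recursion of
`S_j = sin((2j+1)x)` (with `t = 2cos 2x`). The degenerate case `S_j = 2j+1`, `t = 2`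
is also an instance. -/
lemma jacobi_triple {q : ℂ} (hq0 : q ≠ 0) (hq : ‖q‖ < 1) {S : ℕ → ℂ} {t : ℂ}
    (h1 : S 1 = (t + 1) * S 0) (h2 : ∀ j, S (j + 2) + S j = t * S (j + 1))
    (hs : Summable fun j => ‖thetaW q j * S j‖) :
    ∑' j, thetaW q j * S j = (∏' k : ℕ, (1 - q ^ (k + 1))) *
      (S 0 * ∏' k : ℕ, (1 - t * q ^ (k + 1) + q ^ (2 * (k + 1)))) := by
  obtain ⟨M, hM⟩ := gaussC_bounded hq
  have h0 := tprod_one_sub_pow_ne_zero hq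
  have T1 : Tendsto (fun n : ℕ => ∑' j : ℕ, gaussC q n j * (thetaW q j * S j)) atTop
      (nhds (∑' j : ℕ, (∏' k : ℕ, (1 - q ^ (k + 1)))⁻¹ * (thetaW q j * S j))) := by
    refine tendsto_tsum_of_dominated_convergence (hs.mul_left M)
      (fun j => (tendsto_gaussC hq j).mul_const _) (Eventually.of_forall fun n j => ?_)
    rw [norm_mul]
    gcongr
    exact hM n j
  have T2 := ((multipliable_quad hq t).hasProd.tendsto_prod_nat).const_mul (S 0)
  have e : ∀ n : ℕ, ∑' j : ℕ, gaussC q n j * (thetaW q j * S j) =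
      S 0 * ∏ k ∈ Finset.range n, (1 - t * q ^ (k + 1) + q ^ (2 * (k + 1))) := fun n => by
    rw [finite_triple hq0 hq h1 h2, tsum_eq_sum (s := Finset.range (n + 1))]
    · exact Finset.sum_congr rfl fun j _ => by ring
    · intro j hj
      rw [gaussC_eq_zero q (by simpa using hj), zero_mul]
  simp only [e] at T1
  rw [← tendsto_nhds_unique T1 T2, tsum_mul_left, mul_inv_cancel_left₀ h0]

/-! ### The theta series as numerator and denominator of `U_{2n}` -/

lemma summable_thetaW_exp {q : ℂ} (hq0 : q ≠ 0) (hq : ‖q‖ < 1) (r : ℝ) :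
    Summable fun j : ℕ => ‖thetaW q j‖ * Real.exp ((2 * j + 1) * r) := by
  have hne : ∀ j, thetaW q j ≠ 0 := fun j => by simp [thetaW, hq0]
  refine summable_of_ratio_test_tendsto_lt_one (l := 0) one_pos
    (Eventually.of_forall fun j => mul_ne_zero (norm_ne_zero_iff.mpr (hne j)) (Real.exp_ne_zero _))
    ?_
  have h : Tendsto (fun j : ℕ => ‖q‖ ^ (j + 1) * Real.exp (2 * r)) atTop (nhds 0) := by
    simpa using ((tendsto_add_atTop_iff_nat 1).mpr
      (tendsto_pow_atTop_nhds_zero_of_lt_one (norm_nonneg q) hq)).mul_const (Real.exp (2 * r))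
  refine h.congr fun j => ?_
  have h1 : ‖thetaW q j‖ ≠ 0 := norm_ne_zero_iff.mpr (hne j)
  have h2 : Real.exp ((2 * ((j + 1 : ℕ) : ℝ) + 1) * r)
      = Real.exp ((2 * j + 1) * r) * Real.exp (2 * r) := by
    rw [← Real.exp_add]; push_cast; ring_nf
  rw [thetaW_succ, h2]
  simp only [norm_mul, norm_neg, norm_pow, Real.norm_eq_abs, abs_norm, Real.abs_exp]
  field_simp

lemma summable_theta_double {q : ℂ} (hq0 : q ≠ 0) (hq : ‖q‖ < 1) (x : ℂ) :
    Summable fun p : ℕ × ℕ => thetaW q p.1 *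
      ((-1 : ℂ) ^ p.2 * ((2 * p.1 + 1) * x) ^ (2 * p.2 + 1) / ((2 * p.2 + 1).factorial : ℂ)) := by
  apply Summable.of_norm
  have hn : ∀ j : ℕ, ‖(2 * j + 1 : ℂ)‖ = 2 * j + 1 := fun j => by
    exact_mod_cast Complex.norm_natCast (2 * j + 1)
  have e : ∀ j : ℕ, HasSum (fun n : ℕ => ‖thetaW q j * ((-1 : ℂ) ^ n *
      ((2 * j + 1) * x) ^ (2 * n + 1) / ((2 * n + 1).factorial : ℂ))‖)
      (‖thetaW q j‖ * Real.sinh ((2 * j + 1) * ‖x‖)) := fun j => by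
    refine ((Real.hasSum_sinh ((2 * j + 1) * ‖x‖)).mul_left ‖thetaW q j‖).congr_fun fun n => ?_
    simp only [norm_mul, norm_div, norm_pow, norm_neg, norm_one, one_pow, one_mul, hn,
      Complex.norm_natCast]
  rw [summable_prod_of_nonneg (fun _ => norm_nonneg _)]
  refine ⟨fun j => (e j).summable, ?_⟩
  simp only [fun j => (e j).tsum_eq]
  refine Summable.of_nonneg_of_le (fun j => mul_nonneg (norm_nonneg _)
    (Real.sinh_nonneg_iff.mpr (by positivity))) (fun j => ?_) (summable_thetaW_exp hq0 hq ‖x‖)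
  gcongr
  rw [Real.sinh_eq]
  have := Real.exp_pos ((2 * j + 1) * ‖x‖)
  have := Real.exp_pos (-((2 * j + 1) * ‖x‖))
  linarith

/-- The numerators of the `U_{2n}` are, up to sign and factorial, the odd Taylor coefficients of
`∑_j (-1)^j q^{j(j+1)/2} sin((2j+1)x)`. -/
lemma hasSum_theta_sin {q : ℂ} (hq0 : q ≠ 0) (hq : ‖q‖ < 1) (x : ℂ) :
    HasSum (fun n : ℕ => (-1 : ℂ) ^ n *
        (∑' j : ℕ, (-1 : ℂ) ^ j * ((2 * j + 1 : ℕ) : ℂ) ^ (2 * n + 1) * q ^ (j * (j + 1) / 2)) *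
        x ^ (2 * n + 1) / ((2 * n + 1).factorial : ℂ))
      (∑' j : ℕ, thetaW q j * Complex.sin ((2 * j + 1) * x)) := by
  have hs := summable_theta_double hq0 hq x
  have h1 : ∑' j : ℕ, thetaW q j * Complex.sin ((2 * j + 1) * x) = ∑' p : ℕ × ℕ, thetaW q p.1 *
      ((-1 : ℂ) ^ p.2 * ((2 * p.1 + 1) * x) ^ (2 * p.2 + 1) / ((2 * p.2 + 1).factorial : ℂ)) := by
    rw [hs.tsum_prod]
    exact tsum_congr fun j => ((Complex.hasSum_sin _).mul_left _).tsum_eq.symm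
  rw [h1, ← (Equiv.prodComm ℕ ℕ).tsum_eq]
  have hs' := (Equiv.prodComm ℕ ℕ).summable_iff.mpr hs
  refine (hs'.hasSum.prod_fiberwise fun n => (hs'.prod_factor n).hasSum).congr_fun fun n => ?_
  rw [← tsum_mul_left, ← tsum_mul_right, ← tsum_div_const]
  refine tsum_congr fun j => ?_
  simp only [Function.comp, Equiv.prodComm_apply, Prod.swap, thetaW]
  rw [mul_pow]
  push_cast
  ring

lemma theta_sin_eq {q : ℂ} (hq0 : q ≠ 0) (hq : ‖q‖ < 1) (x : ℂ) :
    ∑' j : ℕ, thetaW q j * Complex.sin ((2 * j + 1) * x) = (∏' k : ℕ, (1 - q ^ (k + 1))) *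
      (Complex.sin x *
        ∏' k : ℕ, (1 - (2 * Complex.cos (2 * x)) * q ^ (k + 1) + q ^ (2 * (k + 1)))) := by
  have key : ∀ y : ℂ, Complex.sin (y + 2 * x) + Complex.sin (y - 2 * x) =
      2 * Complex.cos (2 * x) * Complex.sin y := fun y => by
    rw [Complex.sin_add, Complex.sin_sub]; ring
  have hn : ∀ j : ℕ, ‖(2 * j + 1 : ℂ)‖ = 2 * j + 1 := fun j => by
    exact_mod_cast Complex.norm_natCast (2 * j + 1)
  have := jacobi_triple hq0 hq (S := fun j : ℕ => Complex.sin ((2 * j + 1) * x))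
    (t := 2 * Complex.cos (2 * x)) ?_ ?_ ?_
  · simpa using this
  · have := key x
    have e : Complex.sin (x - 2 * x) = - Complex.sin x := by
      rw [← Complex.sin_neg]; ring_nf
    rw [e] at this
    simp only [Nat.cast_one, Nat.cast_zero, mul_one, mul_zero, zero_add, one_mul]
    rw [show ((2 : ℂ) + 1) * x = x + 2 * x by ring]
    linear_combination this
  · intro j
    have := key ((2 * (j + 1 : ℕ) + 1) * x)
    rw [← this]
    push_cast
    ring_nf
  · refine Summable.of_nonneg_of_le (fun _ => norm_nonneg _) (fun j => ?_)
      (summable_thetaW_exp hq0 hq ‖x‖)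
    rw [norm_mul]
    gcongr
    -- `‖sin y‖ ≤ exp ‖y‖`
    have h : ∀ y : ℂ, ‖Complex.sin y‖ ≤ Real.exp ‖y‖ := fun y => by
      have h1 : ‖Complex.exp (-y * I)‖ ≤ Real.exp ‖y‖ := by
        simpa using Complex.norm_exp_le_exp_norm (-y * I)
      have h2 : ‖Complex.exp (y * I)‖ ≤ Real.exp ‖y‖ := by
        simpa using Complex.norm_exp_le_exp_norm (y * I)
      rw [Complex.sin, norm_div, norm_mul, Complex.norm_I, mul_one, Complex.norm_ofNat]
      have := norm_sub_le (Complex.exp (-y * I)) (Complex.exp (y * I))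
      linarith
    refine (h _).trans_eq ?_
    rw [norm_mul, hn]

/-- Jacobi's identity for the denominator of `U_{2n}`; the second product is `∏ (1 - q^k)^2`. -/
lemma theta_odd_eq {q : ℂ} (hq0 : q ≠ 0) (hq : ‖q‖ < 1) :
    ∑' j : ℕ, (-1 : ℂ) ^ j * ((2 * j + 1 : ℕ) : ℂ) * q ^ (j * (j + 1) / 2) =
      (∏' k : ℕ, (1 - q ^ (k + 1))) *
        ∏' k : ℕ, (1 - 2 * q ^ (k + 1) + q ^ (2 * (k + 1))) := by
  have := jacobi_triple hq0 hq (S := fun j : ℕ => ((2 * j + 1 : ℕ) : ℂ)) (t := 2) ?_ ?_ ?_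
  · simp only [mul_zero, zero_add, Nat.cast_one, one_mul] at this
    rw [← this]
    exact tsum_congr fun j => by rw [thetaW]; ring
  · norm_num
  · intro j; push_cast; ring
  · refine Summable.of_nonneg_of_le (fun _ => norm_nonneg _) (fun j => ?_)
      (summable_thetaW_exp hq0 hq 1)
    rw [norm_mul, Complex.norm_natCast]
    gcongr
    have := Real.add_one_le_exp ((2 * j + 1 : ℝ) * 1)
    push_cast
    linarith

/-! ### The logarithm of the sine -/

lemma hasSum_neg_log {u : ℂ} (hu : ‖u‖ < 1) :
    HasSum (fun m : ℕ => u ^ (m + 1) / (m + 1)) (-Complex.log (1 - u)) := by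
  have := (hasSum_nat_add_iff' 1).mpr (Complex.hasSum_taylorSeries_neg_log hu)
  simpa using this

lemma exp_neg_tsum {u : ℂ} (hu : ‖u‖ < 1) :
    Complex.exp (-∑' m : ℕ, u ^ (m + 1) / (m + 1)) = 1 - u := by
  rw [(hasSum_neg_log hu).tsum_eq, neg_neg, Complex.exp_log]
  intro h
  rw [← sub_eq_zero.mp h, norm_one] at hu
  exact lt_irrefl _ hu

/-- The coefficient `-ζ(2k) z^{2k} / k` of `log (sin πz / πz)`, with `k = m + 1`, in terms of the
Bernoulli number `B_{2k}`. -/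
lemma hasSum_bernoulli_term (z : ℂ) (m : ℕ) :
    HasSum (fun j : ℕ => -((z ^ 2 / ((j : ℂ) + 1) ^ 2) ^ (m + 1) / (m + 1)))
      (((bernoulli (2 * (m + 1)) : ℚ) : ℂ) * (2 * (π : ℂ) * Complex.I * z) ^ (2 * (m + 1)) /
        ((2 * (m + 1) : ℕ) * (Nat.factorial (2 * (m + 1)) : ℂ))) := by
  have h := (hasSum_nat_add_iff' 1).mpr (hasSum_zeta_nat (k := m + 1) (by omega))
  have h' := (Complex.hasSum_ofReal.mpr h).mul_left (-(z ^ (2 * (m + 1)) / (m + 1)))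
  convert! h' using 1
  · funext j
    push_cast
    rw [div_pow, ← pow_mul, ← pow_mul]
    ring
  · have hm : (m : ℂ) + 1 ≠ 0 := by exact_mod_cast Nat.succ_ne_zero m
    have hf : ((2 * (m + 1)).factorial : ℂ) ≠ 0 := by
      exact_mod_cast Nat.factorial_ne_zero _
    have hI : Complex.I ^ (2 * (m + 1)) = (-1) ^ (m + 1) := by rw [pow_mul, Complex.I_sq]
    have h2 : (2 : ℂ) ^ (2 * (m + 1)) = 2 * 2 ^ (2 * (m + 1) - 1) := by
      rw [← pow_succ']; congr 1
    simp only [Finset.range_one, Finset.sum_singleton]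
    push_cast
    rw [mul_pow, mul_pow, mul_pow, hI, h2, zero_pow (by omega)]
    field_simp
    ring

lemma summable_sin_double {z : ℂ} (hz : ‖z‖ < 1) :
    Summable fun p : ℕ × ℕ => -((z ^ 2 / ((p.1 : ℂ) + 1) ^ 2) ^ (p.2 + 1) / (p.2 + 1)) := by
  have h1 : Summable fun j : ℕ => 1 / ((j : ℝ) + 1) ^ 2 := by
    exact_mod_cast (summable_nat_add_iff 1).mpr (Real.summable_one_div_nat_pow.mpr one_lt_two)
  have h2 : Summable fun m : ℕ => ‖z‖ ^ m := summable_geometric_of_lt_one (norm_nonneg _) hz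
  refine Summable.of_norm_bounded (h1.mul_of_nonneg h2 (fun _ => by positivity)
    (fun _ => by positivity)) fun p => ?_
  have hn : ∀ j : ℕ, ‖(j + 1 : ℂ)‖ = j + 1 := fun j => by
    exact_mod_cast Complex.norm_natCast (j + 1)
  rw [norm_neg, norm_div, norm_pow, norm_div, norm_pow, norm_pow, hn, hn]
  have hj : (1 : ℝ) ≤ (p.1 + 1 : ℝ) ^ 2 := by
    have : (0 : ℝ) ≤ p.1 := by positivity
    nlinarith
  calc (‖z‖ ^ 2 / ((p.1 : ℝ) + 1) ^ 2) ^ (p.2 + 1) / ((p.2 : ℝ) + 1)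
      ≤ (‖z‖ ^ 2 / ((p.1 : ℝ) + 1) ^ 2) ^ (p.2 + 1) :=
        div_le_self (by positivity) (by have : (0 : ℝ) ≤ p.2 := by positivity
                                        linarith)
    _ = (‖z‖ ^ 2) ^ (p.2 + 1) * (1 / (((p.1 : ℝ) + 1) ^ 2) ^ (p.2 + 1)) := by
        rw [div_pow]; ring
    _ ≤ ‖z‖ ^ p.2 * (1 / ((p.1 : ℝ) + 1) ^ 2) := by
        gcongr ?_ * (1 / ?_)
        · rw [← pow_mul]
          exact pow_le_pow_of_le_one (norm_nonneg _) hz.le (by omega)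
        · exact le_self_pow₀ hj (by omega)
    _ = _ := by ring

/-- `sin πz / πz` as the exponential of a power series with Bernoulli coefficients. -/
lemma sin_eq_exp {z : ℂ} (hz : ‖z‖ < 1) : ∃ s : ℂ,
    HasSum (fun m : ℕ => ((bernoulli (2 * (m + 1)) : ℚ) : ℂ) *
      (2 * (π : ℂ) * Complex.I * z) ^ (2 * (m + 1)) /
        ((2 * (m + 1) : ℕ) * (Nat.factorial (2 * (m + 1)) : ℂ))) s ∧
    Complex.sin (π * z) = π * z * Complex.exp s := by
  have hs := summable_sin_double hz
  have hs' := (Equiv.prodComm ℕ ℕ).summable_iff.mpr hs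
  refine ⟨_, hs'.hasSum.prod_fiberwise fun m => hasSum_bernoulli_term z m, ?_⟩
  have hlt : ∀ j : ℕ, ‖z ^ 2 / ((j : ℂ) + 1) ^ 2‖ < 1 := fun j => by
    have hn : ‖(j + 1 : ℂ)‖ = j + 1 := by exact_mod_cast Complex.norm_natCast (j + 1)
    have hj : (1 : ℝ) ≤ (j + 1 : ℝ) ^ 2 := by
      have : (0 : ℝ) ≤ j := by positivity
      nlinarith
    rw [norm_div, norm_pow, norm_pow, hn]
    exact (div_le_self (by positivity) hj).trans_lt (pow_lt_one₀ (norm_nonneg _) hz two_ne_zero)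
  have h2 : HasSum (fun j : ℕ => -∑' m : ℕ, (z ^ 2 / ((j : ℂ) + 1) ^ 2) ^ (m + 1) / (m + 1))
      (∑' p : ℕ × ℕ, -((z ^ 2 / ((p.1 : ℂ) + 1) ^ 2) ^ (p.2 + 1) / (p.2 + 1))) :=
    hs.hasSum.prod_fiberwise fun j => (hasSum_neg_log (hlt j)).summable.hasSum.neg
  have h3 := (h2.cexp.tendsto_prod_nat).const_mul (π * z)
  simp only [Function.comp, fun j => exp_neg_tsum (hlt j)] at h3
  rw [tendsto_nhds_unique (Complex.tendsto_euler_sin_prod z) h3]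
  congr 2
  exact ((Equiv.prodComm ℕ ℕ).tsum_eq _).symm

/-- Nonvanishing follows from `ζ(2k) > 0`; it makes the division by `B_{2k}` in `E_{2k}` genuine. -/
lemma bernoulli_even_ne_zero (m : ℕ) : bernoulli (2 * (m + 1)) ≠ 0 := by
  intro h
  have hs := hasSum_zeta_nat (k := m + 1) (by omega)
  rw [h] at hs
  simp only [Rat.cast_zero, mul_zero, zero_div] at hs
  have := le_hasSum hs 1 (fun j _ => by positivity)
  norm_num at this

/-! ### The logarithm of the theta product -/

lemma summable_lambert_bound {a r : ℝ} (ha : 0 ≤ a) (ha1 : a < 1) (har : a * Real.exp r < 1) :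
    Summable fun p : ℕ × ℕ => a ^ ((p.1 + 1) * (p.2 + 1)) * Real.exp ((p.2 + 1) * r) := by
  have h1 : Summable fun n : ℕ => a ^ n := summable_geometric_of_lt_one ha ha1
  have h2 : Summable fun m : ℕ => (a * Real.exp r) ^ (m + 1) :=
    (summable_nat_add_iff 1).mpr (summable_geometric_of_lt_one (by positivity) har)
  refine Summable.of_nonneg_of_le (fun _ => by positivity) (fun p => ?_)
    (h1.mul_of_nonneg h2 (fun _ => by positivity) (fun _ => by positivity))
  have e : Real.exp ((p.2 + 1) * r) = Real.exp r ^ (p.2 + 1) := by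
    rw [← Real.exp_nat_mul]; push_cast; rfl
  rw [e, mul_pow, ← mul_assoc, ← pow_add]
  gcongr ?_ * _
  exact pow_le_pow_of_le_one ha ha1.le (by nlinarith [Nat.zero_le (p.1 * p.2)])

/-- The general term of the triple series for `-log ∏_{n≥1} (1 - qⁿe^X)(1 - qⁿe^{-X})`. With
`p = (n, m)`, the factor has index `n + 1`, the logarithm is expanded to order `m + 1`, and `2k` is
the order in the expansion of `e^{(m+1)X} + e^{-(m+1)X}`. -/
def lamF (q X : ℂ) (p : ℕ × ℕ) (k : ℕ) : ℂ :=
  q ^ ((p.1 + 1) * (p.2 + 1)) / (p.2 + 1) *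
    (2 * (((p.2 + 1) * X) ^ (2 * k) / ((2 * k).factorial : ℂ)))

lemma hasSum_lamF (q X : ℂ) (p : ℕ × ℕ) :
    HasSum (lamF q X p)
      (q ^ ((p.1 + 1) * (p.2 + 1)) / (p.2 + 1) * (2 * Complex.cosh ((p.2 + 1) * X))) :=
  ((Complex.hasSum_cosh _).mul_left _).mul_left _

lemma summable_lamF {q X : ℂ} (hq : ‖q‖ < 1) (hX : ‖q‖ * Real.exp ‖X‖ < 1) :
    Summable fun p : (ℕ × ℕ) × ℕ => lamF q X p.1 p.2 := by
  apply Summable.of_norm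
  have hn : ∀ j : ℕ, ‖(j + 1 : ℂ)‖ = j + 1 := fun j => by
    exact_mod_cast Complex.norm_natCast (j + 1)
  have e : ∀ p : ℕ × ℕ, HasSum (fun k => ‖lamF q X p k‖)
      (‖q‖ ^ ((p.1 + 1) * (p.2 + 1)) / (p.2 + 1) * (2 * Real.cosh ((p.2 + 1) * ‖X‖))) := fun p => by
    refine (((Real.hasSum_cosh ((p.2 + 1) * ‖X‖)).mul_left 2).mul_left
      (‖q‖ ^ ((p.1 + 1) * (p.2 + 1)) / (p.2 + 1))).congr_fun fun k => ?_
    simp only [lamF, norm_mul, norm_div, norm_pow, hn, Complex.norm_natCast, Complex.norm_ofNat]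
  rw [summable_prod_of_nonneg (fun _ => norm_nonneg _)]
  refine ⟨fun p => (e p).summable, ?_⟩
  simp only [fun p => (e p).tsum_eq]
  refine Summable.of_nonneg_of_le (fun p => by positivity) (fun p => ?_)
    ((summable_lambert_bound (norm_nonneg q) hq hX).mul_left 2)
  have h1 : 2 * Real.cosh ((p.2 + 1) * ‖X‖) ≤ 2 * Real.exp ((p.2 + 1) * ‖X‖) := by
    rw [Real.cosh_eq]
    have : Real.exp (-((p.2 + 1) * ‖X‖)) ≤ Real.exp ((p.2 + 1) * ‖X‖) :=
      Real.exp_le_exp.mpr (by have : 0 ≤ (p.2 + 1) * ‖X‖ := by positivity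
                              linarith)
    linarith
  have h2 : ‖q‖ ^ ((p.1 + 1) * (p.2 + 1)) / ((p.2 : ℝ) + 1) ≤ ‖q‖ ^ ((p.1 + 1) * (p.2 + 1)) :=
    div_le_self (by positivity) (by have : (0 : ℝ) ≤ p.2 := by positivity
                                    linarith)
  calc _ ≤ ‖q‖ ^ ((p.1 + 1) * (p.2 + 1)) * (2 * Real.exp ((p.2 + 1) * ‖X‖)) := by gcongr
    _ = _ := by ring

lemma tprod_quad_eq_exp {q X : ℂ} (hq : ‖q‖ < 1) (hX : ‖q‖ * Real.exp ‖X‖ < 1) :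
    ∏' k : ℕ, (1 - (2 * Complex.cosh X) * q ^ (k + 1) + q ^ (2 * (k + 1))) =
      Complex.exp (-∑' p : (ℕ × ℕ) × ℕ, lamF q X p.1 p.2) := by
  have h1 := (summable_lamF hq hX).hasSum.prod_fiberwise (hasSum_lamF q X)
  have hlt : ∀ (Y : ℂ) (n : ℕ), ‖Y‖ ≤ ‖X‖ → ‖q ^ (n + 1) * Complex.exp Y‖ < 1 := fun Y n hY => by
    rw [norm_mul, norm_pow]
    refine lt_of_le_of_lt ?_ hX
    gcongr
    · exact pow_le_of_le_one (norm_nonneg _) hq.le (by omega)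
    · exact (Complex.norm_exp_le_exp_norm Y).trans (Real.exp_le_exp.mpr hY)
  have hp := fun n => hasSum_neg_log (hlt X n le_rfl)
  have hm := fun n => hasSum_neg_log (hlt (-X) n (norm_neg X).le)
  have hne : ∀ u : ℂ, ‖u‖ < 1 → 1 - u ≠ 0 := fun u hu h => by
    rw [← sub_eq_zero.mp h, norm_one] at hu
    exact lt_irrefl _ hu
  have h2 := h1.prod_fiberwise (g := fun n => -Complex.log (1 - q ^ (n + 1) * Complex.exp X)
      + -Complex.log (1 - q ^ (n + 1) * Complex.exp (-X))) (fun n => by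
    refine ((hp n).add (hm n)).congr_fun fun m => ?_
    have e : ∀ Y : ℂ, Complex.exp Y ^ (m + 1) = Complex.exp ((m + 1) * Y) := fun Y => by
      rw [← Complex.exp_nat_mul]; push_cast; rfl
    rw [mul_pow, mul_pow, e, e, ← pow_mul, Complex.cosh, mul_neg]
    ring)
  refine (h2.neg.cexp.congr_fun fun n => ?_).tprod_eq
  simp only [Function.comp]
  rw [neg_add, neg_neg, neg_neg, Complex.exp_add, Complex.exp_log (hne _ (hlt X n le_rfl)),
    Complex.exp_log (hne _ (hlt (-X) n (norm_neg X).le)), Complex.cosh, Complex.exp_neg]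
  have := Complex.exp_ne_zero X
  field_simp
  ring

lemma tsum_sigma_eq {q : ℂ} (hq : ‖q‖ < 1) (k : ℕ) :
    ∑' p : ℕ × ℕ, ((p.2 : ℂ) + 1) ^ k * q ^ ((p.1 + 1) * (p.2 + 1)) =
      ∑' n : ℕ, ((ArithmeticFunction.sigma k) (n + 1) : ℂ) * q ^ (n + 1) := by
  have h := tsum_prod_pow_eq_tsum_sigma k hq
  rw [← (summable_prod_mul_pow k hq).tsum_prod,
    tsum_pnat_eq_tsum_succ (f := fun n : ℕ => ((ArithmeticFunction.sigma k) n : ℂ) * q ^ n)] at h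
  rw [← h, ← (Equiv.pnatEquivNat.symm.prodCongr Equiv.pnatEquivNat.symm).tsum_eq]
  refine tsum_congr fun p => ?_
  simp

/-- The product over `q` relative to its value at `X = 0`: the `k = 0` layer of the triple series
is independent of `X`, and the layer `k + 1` is a Lambert series summing to `∑ σ_{2k+1}(n) qⁿ`. -/
lemma quad_ratio {q X : ℂ} (hq : ‖q‖ < 1) (hX : ‖q‖ * Real.exp ‖X‖ < 1) : ∃ s : ℂ,
    HasSum (fun k : ℕ => 2 * X ^ (2 * (k + 1)) / ((2 * (k + 1)).factorial : ℂ) *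
      ∑' n : ℕ, ((ArithmeticFunction.sigma (2 * (k + 1) - 1)) (n + 1) : ℂ) * q ^ (n + 1)) s ∧
    ∏' k : ℕ, (1 - (2 * Complex.cosh X) * q ^ (k + 1) + q ^ (2 * (k + 1))) =
      (∏' k : ℕ, (1 - 2 * q ^ (k + 1) + q ^ (2 * (k + 1)))) * Complex.exp (-s) := by
  have layers : ∀ Y : ℂ, ‖q‖ * Real.exp ‖Y‖ < 1 →
      HasSum (fun k : ℕ => ∑' p : ℕ × ℕ, lamF q Y p k)
        (∑' p : (ℕ × ℕ) × ℕ, lamF q Y p.1 p.2) := fun Y hY => by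
    have hs := summable_lamF hq hY
    have hs' := (Equiv.prodComm ℕ (ℕ × ℕ)).summable_iff.mpr hs
    rw [← (Equiv.prodComm ℕ (ℕ × ℕ)).tsum_eq]
    exact hs'.hasSum.prod_fiberwise fun n => (hs'.prod_factor n).hasSum
  have term : ∀ (Y : ℂ) (k : ℕ), ∑' p : ℕ × ℕ, lamF q Y p (k + 1) =
      2 * Y ^ (2 * (k + 1)) / ((2 * (k + 1)).factorial : ℂ) *
      ∑' n : ℕ, ((ArithmeticFunction.sigma (2 * (k + 1) - 1)) (n + 1) : ℂ) * q ^ (n + 1) := by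
    intro Y k
    rw [← tsum_sigma_eq hq, ← tsum_mul_left]
    refine tsum_congr fun p => ?_
    have hp : (p.2 : ℂ) + 1 ≠ 0 := by exact_mod_cast Nat.succ_ne_zero p.2
    rw [lamF, mul_pow, show 2 * (k + 1) - 1 = 2 * k + 1 by omega,
      show ((p.2 : ℂ) + 1) ^ (2 * (k + 1)) = ((p.2 : ℂ) + 1) ^ (2 * k + 1) * (p.2 + 1) by ring]
    field_simp
  have h0' : ‖q‖ * Real.exp ‖(0 : ℂ)‖ < 1 := by simpa using hq
  have hX1 := (hasSum_nat_add_iff' 1).mpr (layers X hX)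
  have h01 := (hasSum_nat_add_iff' 1).mpr (layers 0 h0')
  simp only [term, Finset.range_one, Finset.sum_singleton] at hX1 h01
  have z0 : (∑' p : (ℕ × ℕ) × ℕ, lamF q 0 p.1 p.2) - ∑' p : ℕ × ℕ, lamF q 0 p 0 = 0 := by
    refine h01.unique ?_
    simp
  have c0 : ∑' p : ℕ × ℕ, lamF q X p 0 = ∑' p : ℕ × ℕ, lamF q 0 p 0 :=
    tsum_congr fun p => by simp [lamF]
  refine ⟨_, hX1, ?_⟩
  have e0 := tprod_quad_eq_exp hq h0'
  rw [Complex.cosh_zero, mul_one] at e0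
  rw [tprod_quad_eq_exp hq hX, e0, ← Complex.exp_add]
  congr 1
  rw [c0]
  linear_combination z0

/-! ### The generating function -/

/-- For every `τ ∈ ℍ` and every `z` in a sufficiently small neighborhood
of `0`,
`∑_{n≥0} (−1)^n U_{2n}(q) (πz)^{2n+1}/(2n+1)! = πz·exp(∑_{n≥1} B_{2n}E_{2n}(τ)(2πiz)^{2n}/(2n·(2n)!))`. -/
theorem U_generating_function_exp
    (τ : ℂ) (hτ : 0 < τ.im) :
    ∃ ε > 0, ∀ z : ℂ, ‖z‖ < ε →
      HasSum (fun n : ℕ =>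
          (-1 : ℂ) ^ n * Uram n (qq τ) * ((π : ℂ) * z) ^ (2 * n + 1) /
            (Nat.factorial (2 * n + 1) : ℂ))
        ((π : ℂ) * z * Complex.exp (∑' n : ℕ,
          ((bernoulli (2 * (n + 1)) : ℚ) : ℂ) * Eser (n + 1) τ *
            (2 * (π : ℂ) * Complex.I * z) ^ (2 * (n + 1)) /
            ((2 * (n + 1) : ℕ) * (Nat.factorial (2 * (n + 1)) : ℂ)))) := by
  have hq0 : qq τ ≠ 0 := Complex.exp_ne_zero _
  have hq : ‖qq τ‖ < 1 := UpperHalfPlane.norm_exp_two_pi_I_lt_one ⟨τ, hτ⟩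
  have hqpos : 0 < ‖qq τ‖ := norm_pos_iff.mpr hq0
  -- `‖q‖ e^{2π‖z‖} < 1` is where the logarithms of all factors `1 - qⁿe^{±2πiz}` expand
  refine ⟨min 1 (-Real.log ‖qq τ‖ / (2 * π)), lt_min one_pos
    (div_pos (neg_pos.mpr (Real.log_neg hqpos hq)) (by positivity)), fun z hz => ?_⟩
  have hz1 : ‖z‖ < 1 := hz.trans_le (min_le_left _ _)
  have hz2 : ‖z‖ < -Real.log ‖qq τ‖ / (2 * π) := hz.trans_le (min_le_right _ _)
  have hX : ‖qq τ‖ * Real.exp ‖2 * (π : ℂ) * Complex.I * z‖ < 1 := by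
    have h1 : ‖2 * (π : ℂ) * Complex.I * z‖ = ‖z‖ * (2 * π) := by
      simp [abs_of_pos Real.pi_pos]; ring
    rw [h1]
    rw [lt_div_iff₀ (by positivity)] at hz2
    calc _ < ‖qq τ‖ * Real.exp (-Real.log ‖qq τ‖) := by gcongr
      _ = 1 := by rw [Real.exp_neg, Real.exp_log hqpos, mul_inv_cancel₀ hqpos.ne']
  obtain ⟨s₁, hs₁, es₁⟩ := sin_eq_exp hz1
  obtain ⟨s₂, hs₂, es₂⟩ := quad_ratio hq hX
  have hsum := (hs₁.sub hs₂).congr_fun (g := fun n : ℕ =>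
      ((bernoulli (2 * (n + 1)) : ℚ) : ℂ) * Eser (n + 1) τ *
        (2 * (π : ℂ) * Complex.I * z) ^ (2 * (n + 1)) /
        ((2 * (n + 1) : ℕ) * (Nat.factorial (2 * (n + 1)) : ℂ))) fun n => by
    have hB : ((bernoulli (2 * (n + 1)) : ℚ) : ℂ) ≠ 0 := by
      exact_mod_cast bernoulli_even_ne_zero n
    have hn : (n : ℂ) + 1 ≠ 0 := by exact_mod_cast Nat.succ_ne_zero n
    have hf : ((2 * (n + 1)).factorial : ℂ) ≠ 0 := by exact_mod_cast Nat.factorial_ne_zero _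
    rw [Eser]
    push_cast
    field_simp
    ring
  rw [hsum.tsum_eq]
  have hP := tprod_one_sub_pow_ne_zero hq
  -- the product `∏ (1 - 2qᵏ + q²ᵏ)` is an exponential, hence nonzero
  have hP2 : ∏' k : ℕ, (1 - 2 * qq τ ^ (k + 1) + qq τ ^ (2 * (k + 1))) ≠ 0 := by
    have e0 := tprod_quad_eq_exp (X := 0) hq (by simpa using hq)
    rw [Complex.cosh_zero, mul_one] at e0
    rw [e0]
    exact Complex.exp_ne_zero _
  have hcos : Complex.cos (2 * (π * z)) = Complex.cosh (2 * (π : ℂ) * Complex.I * z) := by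
    rw [← Complex.cosh_mul_I]; ring_nf
  have main := (hasSum_theta_sin hq0 hq (π * z)).div_const
    (∑' j : ℕ, (-1 : ℂ) ^ j * ((2 * j + 1 : ℕ) : ℂ) * qq τ ^ (j * (j + 1) / 2))
  convert! main using 1
  · funext n
    rw [Uram]
    ring
  · rw [theta_sin_eq hq0 hq, theta_odd_eq hq0 hq, hcos, es₂, es₁, sub_eq_add_neg,
      Complex.exp_add]
    field_simp
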